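/- Let n, p ∈ ℕ with n ≥ 2 and p ≥ 2. Let A₁, …, A_p ∈ GL_n(ℂ) and B₁, …, B_p ∈ GL_n(ℂ) be two families of matrices, each family having n−1 common columns (for each family there is an index k such that all columns with index ≠ k coincide across that family; the index may differ between the two families). Assume that for every i the characteristic polynomial of A_i equals the characteristic polynomial of B_i, and that ⋂_{i=1}^{p} spec(A_i) = ∅. Then there exists u ∈ GL_n(ℂ) such that B_i = u A_i u⁻¹ for every i ∈ {1,…,p}. -/

import Mathlib

/-- `μ ∈ ℂ` is an eigenvalue of the matrix `A`, for the standard action on `ℂⁿ`. -/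
def HasEigen {n : ℕ} (A : Matrix (Fin n) (Fin n) ℂ) (μ : ℂ) : Prop :=
  ∃ v : Fin n → ℂ, v ≠ 0 ∧ A.mulVec v = μ • v

/-!
Passing to transposes, the `Mᵢ = Aᵢᵀ` agree modulo `R eₖ`. Let `W` be the smallest submodule
containing `eₖ` and stable under one of them. On the quotient by `W` all the `Mᵢ` act as the same
endomorphism, which by Cayley–Hamilton is killed by every characteristic polynomial. In the absence
of a common eigenvalue these generate the unit ideal, so the quotient is zero and `eₖ` is a cyclic
vector of `Mᵢ`. Hence there is `v` such that the `k`-th coordinate of `Aᵢʲ v` is `0` for `j < n - 1`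
and `1` for `j = n - 1`. The matrices `Aᵢ` act identically on vectors with vanishing `k`-th
coordinate, so the vectors `v, Aᵢ v, …, Aᵢⁿ⁻¹ v` do not depend on `i`; they form a basis, in which
every `Aᵢ` becomes the companion matrix of its characteristic polynomial.
-/

open Matrix Polynomial

namespace Levelt

section EndomorphismsModuloSubmodule

variable {R M ι : Type*} [CommRing R] [AddCommGroup M] [Module R M]
  {W : Submodule R M} {f : Module.End R M}

theorem aeval_sub_aeval_apply_mem {g : Module.End R M} (hf : ∀ x ∈ W, f x ∈ W)
    (hgf : ∀ x, g x - f x ∈ W) (p : R[X]) (x : M) : aeval g p x - aeval f p x ∈ W := by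
  induction p using Polynomial.induction_on with
  | C a => simp [aeval_C]
  | add p q hp hq =>
    simp only [map_add, LinearMap.add_apply, add_sub_add_comm]
    exact W.add_mem hp hq
  | monomial j a h =>
    simp only [pow_succ', mul_left_comm (C a) X, map_mul _ X, aeval_X, Module.End.mul_apply]
    rw [← sub_add_sub_cancel _ (f _), ← map_sub f]
    exact W.add_mem (hgf _) (hf _ h)

theorem eq_top_of_forall_sub_mem_of_aeval_eq_zero {g : ι → Module.End R M} {p : ι → R[X]}
    (hf : ∀ x ∈ W, f x ∈ W) (hgf : ∀ i x, g i x - f x ∈ W) (hgp : ∀ i, aeval (g i) (p i) = 0)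
    (hp : Ideal.span (Set.range p) = ⊤) : W = ⊤ := by
  have aeval_mem : ∀ q ∈ Ideal.span (Set.range p), ∀ x, aeval f q x ∈ W := by
    intro q hq
    induction hq using Submodule.span_induction with
    | mem q hq =>
      obtain ⟨i, rfl⟩ := hq
      intro x
      simpa [hgp i] using aeval_sub_aeval_apply_mem hf (hgf i) (p i) x
    | zero => simp
    | add q r _ _ hq hr =>
      intro x
      simpa only [map_add, LinearMap.add_apply] using W.add_mem (hq x) (hr x)
    | smul a q _ hq =>
      intro x
      simpa only [smul_eq_mul, mul_comm a q, map_mul, Module.End.mul_apply] using hq (aeval f a x)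
  refine Submodule.eq_top_iff'.2 fun x => ?_
  simpa using aeval_mem 1 (hp ▸ Submodule.mem_top) x

end EndomorphismsModuloSubmodule

section CommonRoots

theorem span_range_eq_top_of_not_exists_isRoot {K ι : Type*} [Field K] [IsAlgClosed K]
    {p : ι → K[X]} (hp : ¬ ∃ μ, ∀ i, (p i).IsRoot μ) : Ideal.span (Set.range p) = ⊤ := by
  obtain ⟨g, hg⟩ := IsPrincipalIdealRing.principal (Ideal.span (Set.range p))
  rw [Ideal.submodule_span_eq] at hg
  by_contra hne
  rw [hg, Ideal.span_singleton_eq_top, isUnit_iff_degree_eq_zero] at hne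
  obtain ⟨μ, hμ⟩ := IsAlgClosed.exists_root g hne
  refine hp ⟨μ, fun i => hμ.dvd (Ideal.mem_span_singleton.1 ?_)⟩
  exact hg ▸ Ideal.subset_span (Set.mem_range_self i)

theorem hasEigen_iff_isRoot_charpoly {n : ℕ} {A : Matrix (Fin n) (Fin n) ℂ} {μ : ℂ} :
    HasEigen A μ ↔ A.charpoly.IsRoot μ := by
  rw [← mem_spectrum_iff_isRoot_charpoly, ← spectrum_toLin',
    ← Module.End.hasEigenvalue_iff_mem_spectrum]
  constructor
  · rintro ⟨v, hv, hAv⟩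
    exact Module.End.hasEigenvalue_of_hasEigenvector ⟨Module.End.mem_eigenspace_iff.2 hAv, hv⟩
  · intro hμ
    obtain ⟨v, hAv, hv⟩ := hμ.exists_hasEigenvector
    exact ⟨v, hv, Module.End.mem_eigenspace_iff.1 hAv⟩

end CommonRoots

variable {R : Type*} [CommRing R] {n : ℕ}

section Krylov

/-- The Krylov matrix of `A` and `v`, whose columns are `v, A v, …, Aⁿ⁻¹ v`. It is the
change-of-basis matrix to the basis in which `A` becomes a companion matrix. -/
def krylov (A : Matrix (Fin n) (Fin n) R) (v : Fin n → R) : Matrix (Fin n) (Fin n) R :=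
  of fun a j => (A ^ (j : ℕ) *ᵥ v) a

/-- The companion matrix of a monic polynomial `q` of degree `n`: ones on the subdiagonal, and the
negated coefficients of `q` in the last column. The size `n` is an argument, instead of being
`q.natDegree`, so that the companion matrices of different polynomials have the same type. -/
def companion (n : ℕ) (q : R[X]) : Matrix (Fin n) (Fin n) R :=
  of fun a b => if (b : ℕ) + 1 < n then (if (a : ℕ) = b + 1 then 1 else 0) else -q.coeff a

theorem pow_eq_neg_sum_coeff_charpoly (A : Matrix (Fin n) (Fin n) R) :
    A ^ n = -∑ j : Fin n, A.charpoly.coeff j • A ^ (j : ℕ) := by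
  nontriviality R
  have cayley_hamilton := A.aeval_self_charpoly
  rw [A.charpoly_monic.as_sum, charpoly_natDegree_eq_dim, Fintype.card_fin] at cayley_hamilton
  simp only [map_add, map_pow, aeval_X, map_sum, map_mul, aeval_C, ← Algebra.smul_def]
    at cayley_hamilton
  rw [← Fin.sum_univ_eq_sum_range (fun j => A.charpoly.coeff j • A ^ j)] at cayley_hamilton
  exact eq_neg_of_add_eq_zero_left cayley_hamilton

theorem mul_krylov (A : Matrix (Fin n) (Fin n) R) (v : Fin n → R) :
    A * krylov A v = krylov A v * companion n A.charpoly := by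
  ext a b
  have shift : (A * krylov A v) a b = (A ^ ((b : ℕ) + 1) *ᵥ v) a := by
    rw [pow_succ', ← mulVec_mulVec]
    rfl
  rw [shift, mul_apply]
  by_cases hb : (b : ℕ) + 1 < n
  · rw [Finset.sum_eq_single_of_mem ⟨b + 1, hb⟩ (Finset.mem_univ _)]
    · simp [krylov, companion, hb]
    · intro c _ hc
      have hcb : (c : ℕ) ≠ b + 1 := fun h => hc (Fin.ext h)
      simp [companion, hb, hcb]
  · have last : (b : ℕ) + 1 = n := by omega
    rw [last, pow_eq_neg_sum_coeff_charpoly]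
    simp [krylov, companion, last, neg_mulVec, sum_mulVec, smul_mulVec, mul_comm]

theorem krylov_transpose_mulVec (A : Matrix (Fin n) (Fin n) R) (w v : Fin n → R) (j : Fin n) :
    ((krylov Aᵀ w)ᵀ *ᵥ v) j = w ⬝ᵥ (A ^ (j : ℕ) *ᵥ v) := by
  rw [dotProduct_mulVec, ← mulVec_transpose, transpose_pow]
  rfl

theorem krylov_transpose_mul_krylov (A : Matrix (Fin n) (Fin n) R) (w v : Fin n → R)
    (a b : Fin n) :
    ((krylov Aᵀ w)ᵀ * krylov A v) a b = w ⬝ᵥ (A ^ ((a : ℕ) + b) *ᵥ v) := by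
  rw [pow_add, ← mulVec_mulVec, ← krylov_transpose_mulVec]
  rfl

theorem isUnit_krylov_of_dotProduct_pow_mulVec {A : Matrix (Fin n) (Fin n) R} {w v : Fin n → R}
    (h : ∀ j < n, w ⬝ᵥ (A ^ j *ᵥ v) = if j + 1 = n then 1 else 0) : IsUnit (krylov A v) := by
  -- Reversing the rows of the Hankel matrix `w ⬝ᵥ Aᵃ⁺ᵇ v` makes it unitriangular.
  let H := ((krylov Aᵀ w)ᵀ.submatrix Fin.rev id) * krylov A v
  have H_apply (a b : Fin n) : H a b = w ⬝ᵥ (A ^ ((a.rev : ℕ) + b) *ᵥ v) :=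
    krylov_transpose_mul_krylov A w v a.rev b
  have det_H : H.det = 1 := by
    rw [det_of_isUpperTriangular]
    · refine Finset.prod_eq_one fun a _ => ?_
      rw [H_apply, h _ (by grind), if_pos (by grind)]
    · intro a b (hab : b < a)
      rw [H_apply, h _ (by grind), if_neg (by grind)]
  rw [det_mul] at det_H
  exact (isUnit_iff_isUnit_det _).2 (.of_mul_eq_one_right _ det_H)

end Krylov

section CommonColumns

variable {k : Fin n} {A B : Matrix (Fin n) (Fin n) R}

/-- `A` and `B` have the same columns, except possibly the one of index `k`. A family has `n - 1`
common columns when its members are pairwise related in this way, with a single `k`. -/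
def EqOffCol (k : Fin n) (A B : Matrix (Fin n) (Fin n) R) : Prop :=
  ∀ l, l ≠ k → ∀ m, A m l = B m l

theorem EqOffCol.mulVec_eq (h : EqOffCol k A B) {x : Fin n → R} (hx : x k = 0) :
    A *ᵥ x = B *ᵥ x := by
  ext m
  simp only [mulVec, dotProduct]
  refine Finset.sum_congr rfl fun l _ => ?_
  obtain rfl | hl := eq_or_ne l k
  · simp [hx]
  · rw [h l hl]

theorem EqOffCol.transpose_mulVec_sub (h : EqOffCol k A B) (x : Fin n → R) :
    Aᵀ *ᵥ x - Bᵀ *ᵥ x = (Aᵀ *ᵥ x - Bᵀ *ᵥ x) k • Pi.single k 1 := by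
  ext l
  obtain rfl | hl := eq_or_ne l k
  · simp
  · simp [hl, mulVec, dotProduct, h l hl]

theorem EqOffCol.krylov_eq (h : EqOffCol k A B) {v : Fin n → R}
    (hv : ∀ j, j + 1 < n → (B ^ j *ᵥ v) k = 0) : krylov A v = krylov B v := by
  have pow_mulVec_eq (j : ℕ) (hj : j < n) : A ^ j *ᵥ v = B ^ j *ᵥ v := by
    induction j with
    | zero => simp
    | succ j ih =>
      rw [pow_succ', pow_succ', ← mulVec_mulVec, ← mulVec_mulVec, ih (by omega),
        h.mulVec_eq (hv j hj)]
  ext a j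
  exact congrFun (pow_mulVec_eq j j.2) a

end CommonColumns

section CompanionForm

variable {ι : Type*} {k : Fin n} {A : ι → Matrix (Fin n) (Fin n) R}

theorem isUnit_krylov_transpose_single (hA : ∀ i i', EqOffCol k (A i) (A i'))
    (hspan : Ideal.span (Set.range fun i => (A i).charpoly) = ⊤) (i₀ : ι) :
    IsUnit (krylov (A i₀)ᵀ (Pi.single k 1)) := by
  set K := krylov (A i₀)ᵀ (Pi.single k 1) with hK
  let W := LinearMap.range K.mulVecLin
  have single_mem : Pi.single k 1 ∈ W := by
    refine ⟨Pi.single ⟨0, k.pos⟩ 1, ?_⟩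
    ext a
    simp [hK, krylov, one_apply, Pi.single_apply]
  have invariant : ∀ x ∈ W, toLin' (A i₀)ᵀ x ∈ W := by
    rintro _ ⟨y, rfl⟩
    refine ⟨companion n (A i₀)ᵀ.charpoly *ᵥ y, ?_⟩
    simp only [mulVecLin_apply, toLin'_apply, mulVec_mulVec, hK, mul_krylov]
  have sub_mem (i : ι) (x) : toLin' (A i)ᵀ x - toLin' (A i₀)ᵀ x ∈ W := by
    rw [toLin'_apply, toLin'_apply, (hA i i₀).transpose_mulVec_sub]
    exact W.smul_mem _ single_mem
  have aeval_eq_zero (i : ι) : aeval (toLin' (A i)ᵀ) (A i).charpoly = 0 := by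
    rw [← charpoly_transpose, ← charpoly_toLin']
    exact LinearMap.aeval_self_charpoly _
  have W_eq_top : W = ⊤ :=
    eq_top_of_forall_sub_mem_of_aeval_eq_zero invariant sub_mem aeval_eq_zero hspan
  exact mulVec_surjective_iff_isUnit.1 (LinearMap.range_eq_top.1 W_eq_top)

theorem exists_isUnit_mul_eq_mul_companion (hA : ∃ k, ∀ i i', EqOffCol k (A i) (A i'))
    (hspan : Ideal.span (Set.range fun i => (A i).charpoly) = ⊤) :
    ∃ P, IsUnit P ∧ ∀ i, A i * P = P * companion n (A i).charpoly := by
  obtain _ | ⟨⟨i₀⟩⟩ := isEmpty_or_nonempty ι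
  · exact ⟨1, isUnit_one, isEmptyElim⟩
  obtain ⟨k, hA⟩ := hA
  have unit_K := isUnit_krylov_transpose_single hA hspan i₀
  obtain ⟨v, hv⟩ := mulVec_surjective_iff_isUnit.2 ((isUnit_transpose _).2 unit_K)
    fun j : Fin n => if (j : ℕ) + 1 = n then 1 else 0
  have coord_pow (j : ℕ) (hj : j < n) :
      Pi.single k 1 ⬝ᵥ (A i₀ ^ j *ᵥ v) = if j + 1 = n then 1 else 0 :=
    (krylov_transpose_mulVec (A i₀) _ v ⟨j, hj⟩).symm.trans (congrFun hv ⟨j, hj⟩)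
  refine ⟨krylov (A i₀) v, isUnit_krylov_of_dotProduct_pow_mulVec coord_pow, fun i => ?_⟩
  have krylov_eq : krylov (A i) v = krylov (A i₀) v :=
    (hA i i₀).krylov_eq fun j hj => by simpa [hj.ne] using coord_pow j (by omega)
  rw [← krylov_eq, mul_krylov]

end CompanionForm

end Levelt

open Levelt in
theorem levelt_stmt13_general {R ι : Type*} [CommRing R] {n : ℕ}
    {A B : ι → Matrix (Fin n) (Fin n) R}
    (hA : ∃ k, ∀ i i', EqOffCol k (A i) (A i')) (hB : ∃ k, ∀ i i', EqOffCol k (B i) (B i'))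
    (hchar : ∀ i, (A i).charpoly = (B i).charpoly)
    (hspan : Ideal.span (Set.range fun i => (A i).charpoly) = ⊤) :
    ∃ u : Matrix (Fin n) (Fin n) R, IsUnit u.det ∧ ∀ i, B i = u * A i * u⁻¹ := by
  obtain ⟨P, hP, hAP⟩ := exists_isUnit_mul_eq_mul_companion hA hspan
  obtain ⟨Q, hQ, hBQ⟩ := exists_isUnit_mul_eq_mul_companion hB (by simpa only [hchar] using hspan)
  rw [isUnit_iff_isUnit_det] at hP hQ
  refine ⟨Q * P⁻¹, ?_, fun i => ?_⟩
  · rw [det_mul]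
    exact hQ.mul (isUnit_nonsing_inv_det P hP)
  · calc B i = Q * companion n (A i).charpoly * Q⁻¹ := by
          rw [hchar, ← hBQ, mul_nonsing_inv_cancel_right _ _ hQ]
      _ = Q * (P⁻¹ * (A i * P)) * Q⁻¹ := by rw [hAP, nonsing_inv_mul_cancel_left _ _ hP]
      _ = Q * P⁻¹ * A i * (Q * P⁻¹)⁻¹ := by
          simp only [Matrix.mul_inv_rev, nonsing_inv_nonsing_inv _ hP, Matrix.mul_assoc]

/-- uniqueness in Levelt's theorem. Two families `A₁,…,A_p` and
`B₁,…,B_p` in `GLₙ(ℂ)` (`n, p ≥ 2`), each having `n−1` common columns, with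
`charpoly (A i) = charpoly (B i)` for all `i` and the `A i` having no common eigenvalue,
are simultaneously conjugate: `B i = u (A i) u⁻¹` for a single `u ∈ GLₙ(ℂ)`. -/
theorem levelt_stmt13 (n p : ℕ) (hn : 2 ≤ n) (hp : 2 ≤ p)
    (A B : Fin p → Matrix (Fin n) (Fin n) ℂ)
    (hA : ∀ i, IsUnit (A i).det) (hB : ∀ i, IsUnit (B i).det)
    (hcA : ∃ k : Fin n, ∀ i i' : Fin p, ∀ l : Fin n, l ≠ k → ∀ m : Fin n,
             A i m l = A i' m l)
    (hcB : ∃ k : Fin n, ∀ i i' : Fin p, ∀ l : Fin n, l ≠ k → ∀ m : Fin n,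
             B i m l = B i' m l)
    (hchar : ∀ i, (A i).charpoly = (B i).charpoly)
    (heig : ¬ ∃ μ : ℂ, ∀ i, HasEigen (A i) μ) :
    ∃ u : Matrix (Fin n) (Fin n) ℂ, IsUnit u.det ∧ ∀ i, B i = u * A i * u⁻¹ :=
  levelt_stmt13_general hcA hcB hchar <| Levelt.span_range_eq_top_of_not_exists_isRoot
    fun ⟨μ, hμ⟩ => heig ⟨μ, fun i => Levelt.hasEigen_iff_isRoot_charpoly.2 (hμ i)⟩
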